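/- Fix m > 0 and take μ(ρ) = −ln(1 − 2m/ρ) and ν(ρ) = −μ(ρ) on ρ > 2m (the Schwarzschild metric g = diag((1−2m/ρ)^{−1}, ρ², ρ² sin²θ, 1−2m/ρ)). Then on ρ > 2m, 0 < θ < π, one has R_{1313}·R_{1414}·R_{2323}·R_{2424} = (det g)²·(2m²/ρ⁶)², where det g = ρ⁴ sin²θ; hence the curvature κ = √(R_{1313} R_{1414} R_{2323} R_{2424}) / det g equals 2m²/ρ⁶. -/

import Mathlib

noncomputable section

/-- Partial derivative of a scalar function on `ℝ⁴` in the `i`-th coordinate direction. -/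
def pd (f : (Fin 4 → ℝ) → ℝ) (i : Fin 4) (x : Fin 4 → ℝ) : ℝ :=
  fderiv ℝ f x (Pi.single i 1)

/-- Christoffel symbols of the first kind,
`Γ_{αβ,γ} = ½ (∂_{q^α} g_{βγ} + ∂_{q^β} g_{αγ} - ∂_{q^γ} g_{αβ})`. -/
def Γ1 (g : (Fin 4 → ℝ) → Matrix (Fin 4) (Fin 4) ℝ) (α β γ : Fin 4) (x : Fin 4 → ℝ) : ℝ :=
  (1 / 2) * (pd (fun y => g y β γ) α x + pd (fun y => g y α γ) β x - pd (fun y => g y α β) γ x)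

/-- Covariant Riemann–Christoffel curvature components
`R_{αβδγ} = ∂_{q^δ} Γ_{βγ,α} - ∂_{q^γ} Γ_{βδ,α} + Σ_{λσ} g^{λσ} (Γ_{βδ,λ} Γ_{αγ,σ} - Γ_{βγ,λ} Γ_{αδ,σ})`. -/
def Rcov (g : (Fin 4 → ℝ) → Matrix (Fin 4) (Fin 4) ℝ) (α β δ γ : Fin 4) (x : Fin 4 → ℝ) : ℝ :=
  pd (Γ1 g β γ α) δ x - pd (Γ1 g β δ α) γ x +
    ∑ lam, ∑ sig, (g x)⁻¹ lam sig *
      (Γ1 g β δ lam x * Γ1 g α γ sig x - Γ1 g β γ lam x * Γ1 g α δ sig x)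

/-- The spherically symmetric diagonal metric
`g = diag (e^{μ(ρ)}, ρ², ρ² sin² θ, e^{ν(ρ)})` in coordinates `(ρ, θ, φ, τ) = (x 0, x 1, x 2, x 3)`. -/
def gSph (μ ν : ℝ → ℝ) (x : Fin 4 → ℝ) : Matrix (Fin 4) (Fin 4) ℝ :=
  Matrix.diagonal
    ![Real.exp (μ (x 0)), (x 0) ^ 2, (x 0) ^ 2 * Real.sin (x 1) ^ 2, Real.exp (ν (x 0))]

/-!
For a diagonal metric `diag (d₁, …, d₄)` only the Christoffel symbols with a repeated index survive,
so each component `R_{αβαβ}` is explicit in the first and second derivatives of the coefficients: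
`R_{αβαβ} = -½ (∂_α² d_β + ∂_β² d_α) + ¼ [((∂_β d_α)² + ∂_α d_α ∂_α d_β) / d_α
  + ((∂_α d_β)² + ∂_β d_β ∂_β d_α) / d_β - ∑_{γ ≠ α, β} ∂_γ d_α ∂_γ d_β / d_γ]`.
For `diag (e^μ, ρ², ρ² sin² θ, e^ν)` this gives `R₁₃₁₃ = ½ ρ μ' sin² θ`,
`R₁₄₁₄ = ¼ e^ν (μ' ν' - ν'² - 2 ν'')`, `R₂₃₂₃ = ρ² sin² θ (1 - e^{-μ})` and
`R₂₄₂₄ = -½ ρ ν' e^{ν - μ}`. When `μ = -ν` the second one is `-½ (e^ν)''`. With `e^ν = 1 - 2m/ρ`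
two of the four components are proportional to `m` and two to `2m`, and the factors `1 - 2m/ρ` of
`R₁₃₁₃` and `R₂₄₂₄` cancel in the product.
-/

section Derivatives

theorem deriv_deriv_exp_comp {f : ℝ → ℝ} {t : ℝ} (hf : ContDiffAt ℝ 2 f t) :
    deriv (deriv fun s => Real.exp (f s)) t =
      Real.exp (f t) * (deriv f t ^ 2 + deriv (deriv f) t) := by
  have hderiv : deriv (fun s => Real.exp (f s)) =ᶠ[nhds t] fun s => Real.exp (f s) * deriv f s := by
    filter_upwards [hf.eventually (by simp)] with s hs
    exact deriv_exp (hs.differentiableAt two_ne_zero)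
  have hf₁ : DifferentiableAt ℝ f t := hf.differentiableAt two_ne_zero
  have hf₂ : DifferentiableAt ℝ (deriv f) t :=
    ((hf.fderiv_right (m := 1) (by norm_num)).clm_apply contDiffAt_const).differentiableAt
      one_ne_zero
  rw [hderiv.deriv_eq, deriv_fun_mul hf₁.exp hf₂, deriv_exp hf₁]
  ring

theorem pd_const (c : ℝ) (i : Fin 4) : pd (fun _ => c) i = 0 := by
  funext x
  simp [pd]

theorem pd_const_mul (c : ℝ) (f : (Fin 4 → ℝ) → ℝ) (i : Fin 4) (x : Fin 4 → ℝ) :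
    pd (fun y => c * f y) i x = c * pd f i x := by
  change fderiv ℝ (c • f) x _ = _
  rw [fderiv_const_smul_field]
  rfl

theorem pd_mul {f h : (Fin 4 → ℝ) → ℝ} {x : Fin 4 → ℝ} (hf : DifferentiableAt ℝ f x)
    (hh : DifferentiableAt ℝ h x) (i : Fin 4) :
    pd (fun y => f y * h y) i x = pd f i x * h x + f x * pd h i x := by
  simp only [pd, fderiv_fun_mul hf hh, add_apply, smul_apply, smul_eq_mul]
  ring

theorem differentiableAt_comp_apply_iff {ι : Type*} [Finite ι] {φ : ℝ → ℝ} {x : ι → ℝ} {j : ι} :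
    DifferentiableAt ℝ (fun y : ι → ℝ => φ (y j)) x ↔ DifferentiableAt ℝ φ (x j) := by
  classical
  have := Fintype.ofFinite ι
  refine ⟨fun hφ => ?_, fun hφ => hφ.comp x (differentiableAt_apply j x)⟩
  have hupdate : DifferentiableAt ℝ (Function.update x j) (x j) :=
    (hasDerivAt_update x j (x j)).differentiableAt
  rw [← Function.update_eq_self j x] at hφ
  simpa [Function.comp_def] using hφ.comp (x j) hupdate

theorem pd_comp_apply (φ : ℝ → ℝ) (i j : Fin 4) :
    pd (fun y => φ (y j)) i = fun y => if i = j then deriv φ (y j) else 0 := by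
  funext x
  by_cases hφ : DifferentiableAt ℝ φ (x j)
  · have hcomp := hφ.hasDerivAt.comp_hasFDerivAt x (hasFDerivAt_apply (𝕜 := ℝ) j x)
    have hfderiv : fderiv ℝ (fun y : Fin 4 → ℝ => φ (y j)) x = _ := hcomp.fderiv
    rw [pd, hfderiv]
    simp [Pi.single_apply, eq_comm]
  -- Where `φ` is not differentiable, both sides take the junk value `0`.
  · rw [pd, fderiv_zero_of_not_differentiableAt (mt differentiableAt_comp_apply_iff.1 hφ),
      deriv_zero_of_not_differentiableAt hφ]
    simp

theorem pd_comp_apply_mul_comp_apply {φ ψ : ℝ → ℝ} (hφ : Differentiable ℝ φ)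
    (hψ : Differentiable ℝ ψ) (i j k : Fin 4) :
    pd (fun y => φ (y j) * ψ (y k)) i = fun y =>
      (if i = j then deriv φ (y j) else 0) * ψ (y k) +
        φ (y j) * if i = k then deriv ψ (y k) else 0 := by
  funext x
  rw [pd_mul (differentiableAt_comp_apply_iff.2 (hφ _)) (differentiableAt_comp_apply_iff.2 (hψ _)),
    pd_comp_apply, pd_comp_apply]

end Derivatives

section DiagonalMetric

variable {d : (Fin 4 → ℝ) → Fin 4 → ℝ} {x : Fin 4 → ℝ} {α β γ : Fin 4}

theorem pd_diagonal_of_ne (h : α ≠ β) (γ : Fin 4) (x : Fin 4 → ℝ) :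
    pd (fun y => Matrix.diagonal (d y) α β) γ x = 0 := by
  simp [Matrix.diagonal_apply_ne _ h, pd_const]

theorem Γ1_diagonal_right (d : (Fin 4 → ℝ) → Fin 4 → ℝ) (α β : Fin 4) :
    Γ1 (fun y => Matrix.diagonal (d y)) α β β = fun y => 1 / 2 * pd (fun z => d z β) α y := by
  funext x
  by_cases h : α = β
  · subst h
    simp [Γ1]
  · simp [Γ1, pd_diagonal_of_ne h]

theorem Γ1_diagonal_left (d : (Fin 4 → ℝ) → Fin 4 → ℝ) (α β : Fin 4) :
    Γ1 (fun y => Matrix.diagonal (d y)) α β α = fun y => 1 / 2 * pd (fun z => d z α) β y := by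
  funext x
  by_cases h : α = β
  · subst h
    simp [Γ1]
  · simp [Γ1, pd_diagonal_of_ne h, pd_diagonal_of_ne (Ne.symm h)]

theorem Γ1_diagonal_self_of_ne (h : α ≠ γ) :
    Γ1 (fun y => Matrix.diagonal (d y)) α α γ = fun y => -1 / 2 * pd (fun z => d z α) γ y := by
  funext x
  simp only [Γ1, pd_diagonal_of_ne h, Matrix.diagonal_apply_eq]
  ring

theorem Γ1_diagonal_of_ne (hαβ : α ≠ β) (hαγ : α ≠ γ) (hβγ : β ≠ γ) :
    Γ1 (fun y => Matrix.diagonal (d y)) α β γ x = 0 := by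
  simp [Γ1, pd_diagonal_of_ne hαβ, pd_diagonal_of_ne hαγ, pd_diagonal_of_ne hβγ]

theorem inv_diagonal_of_ne_zero {n K : Type*} [Fintype n] [DecidableEq n] [Field K] {v : n → K}
    (hv : ∀ i, v i ≠ 0) : (Matrix.diagonal v)⁻¹ = Matrix.diagonal v⁻¹ := by
  refine Matrix.inv_eq_right_inv ?_
  simp [Matrix.diagonal_mul_diagonal, hv]

theorem Rcov_diagonal (hαβ : α ≠ β) (hd : ∀ i, d x i ≠ 0) :
    Rcov (fun y => Matrix.diagonal (d y)) α β α β x =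
      -(pd (pd (fun y => d y β) α) α x + pd (pd (fun y => d y α) β) β x) / 2 +
        ((pd (fun y => d y α) β x ^ 2 + pd (fun y => d y α) α x * pd (fun y => d y β) α x) /
            d x α +
          (pd (fun y => d y β) α x ^ 2 + pd (fun y => d y β) β x * pd (fun y => d y α) β x) /
            d x β -
          ∑ γ ∈ {α, β}ᶜ, pd (fun y => d y α) γ x * pd (fun y => d y β) γ x / d x γ) / 4 := by
  have hsum (γ : Fin 4) (hγ : γ ∈ ({α, β} : Finset (Fin 4))ᶜ) :
      (d x γ)⁻¹ * (Γ1 (fun y => Matrix.diagonal (d y)) β α γ x *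
          Γ1 (fun y => Matrix.diagonal (d y)) α β γ x -
        Γ1 (fun y => Matrix.diagonal (d y)) β β γ x *
          Γ1 (fun y => Matrix.diagonal (d y)) α α γ x) =
      -1 / 4 * (pd (fun y => d y α) γ x * pd (fun y => d y β) γ x / d x γ) := by
    obtain ⟨hγα, hγβ⟩ : γ ≠ α ∧ γ ≠ β := by simpa using hγ
    rw [Γ1_diagonal_of_ne hαβ hγα.symm hγβ.symm, Γ1_diagonal_self_of_ne hγα.symm,
      Γ1_diagonal_self_of_ne hγβ.symm]
    ring
  rw [Rcov, inv_diagonal_of_ne_zero hd]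
  simp only [Matrix.diagonal_apply, ite_mul, zero_mul, Finset.sum_ite_eq, Finset.mem_univ, if_true,
    Pi.inv_apply]
  rw [← Finset.sum_add_sum_compl {α, β}, Finset.sum_congr rfl hsum, ← Finset.mul_sum,
    Finset.sum_pair hαβ]
  simp only [Γ1_diagonal_right, Γ1_diagonal_left, Γ1_diagonal_self_of_ne hαβ,
    Γ1_diagonal_self_of_ne hαβ.symm, pd_const_mul]
  ring

end DiagonalMetric

section SphericallySymmetricMetric

variable {μ ν : ℝ → ℝ} {x : Fin 4 → ℝ}

/-- The coefficients of the diagonal metric `gSph μ ν`, as a map into `ℝ⁴` so that the curvature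
formula for diagonal metrics applies to it. -/
def sphCoeff (μ ν : ℝ → ℝ) (x : Fin 4 → ℝ) : Fin 4 → ℝ :=
  ![Real.exp (μ (x 0)), x 0 ^ 2, x 0 ^ 2 * Real.sin (x 1) ^ 2, Real.exp (ν (x 0))]

theorem gSph_eq_diagonal (μ ν : ℝ → ℝ) : gSph μ ν = fun x => Matrix.diagonal (sphCoeff μ ν x) :=
  rfl

theorem det_gSph (μ ν : ℝ → ℝ) (x : Fin 4 → ℝ) :
    (gSph μ ν x).det = Real.exp (μ (x 0) + ν (x 0)) * (x 0 ^ 4 * Real.sin (x 1) ^ 2) := by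
  rw [gSph, Matrix.det_diagonal, Fin.prod_univ_four, Real.exp_add]
  simp only [Matrix.cons_val]
  ring

theorem sphCoeff_ne_zero (hρ : x 0 ≠ 0) (hθ : Real.sin (x 1) ≠ 0) (i : Fin 4) :
    sphCoeff μ ν x i ≠ 0 := by
  fin_cases i <;> simp [sphCoeff, hρ, hθ]

theorem pd_sphCoeff (μ ν : ℝ → ℝ) (i j : Fin 4) :
    pd (fun y => sphCoeff μ ν y j) i = fun y =>
      !![deriv (fun ρ => Real.exp (μ ρ)) (y 0), 0, 0, 0;
        2 * y 0, 0, 0, 0;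
        2 * y 0 * Real.sin (y 1) ^ 2, y 0 ^ 2 * Real.sin (2 * y 1), 0, 0;
        deriv (fun ρ => Real.exp (ν ρ)) (y 0), 0, 0, 0] j i := by
  fin_cases j
  · refine (pd_comp_apply (fun ρ => Real.exp (μ ρ)) i 0).trans ?_
    fin_cases i <;> simp
  · refine (pd_comp_apply (fun ρ => ρ ^ 2) i 0).trans ?_
    fin_cases i <;> simp
  · refine (pd_comp_apply_mul_comp_apply (φ := fun ρ => ρ ^ 2) (ψ := fun θ => Real.sin θ ^ 2)
      (by fun_prop) (by fun_prop) i 0 1).trans ?_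
    fin_cases i <;> simp [Real.sin_two_mul]
  · refine (pd_comp_apply (fun ρ => Real.exp (ν ρ)) i 0).trans ?_
    fin_cases i <;> simp

theorem pd_zero_pd_zero_sphCoeff_two (μ ν : ℝ → ℝ) (x : Fin 4 → ℝ) :
    pd (pd (fun y => sphCoeff μ ν y 2) 0) 0 x = 2 * Real.sin (x 1) ^ 2 := by
  have hprod := pd_comp_apply_mul_comp_apply (φ := fun ρ => 2 * ρ) (ψ := fun θ => Real.sin θ ^ 2)
    (by fun_prop) (by fun_prop) 0 0 1
  rw [pd_sphCoeff]
  simpa using congrFun hprod x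

theorem pd_one_pd_one_sphCoeff_two (μ ν : ℝ → ℝ) (x : Fin 4 → ℝ) :
    pd (pd (fun y => sphCoeff μ ν y 2) 1) 1 x = 2 * x 0 ^ 2 * Real.cos (2 * x 1) := by
  have hsin : deriv (fun θ => Real.sin (2 * θ)) (x 1) = 2 * Real.cos (2 * x 1) := by
    rw [deriv_comp_mul_left 2 Real.sin, Real.deriv_sin, smul_eq_mul]
  have hprod := pd_comp_apply_mul_comp_apply (φ := fun ρ => ρ ^ 2)
    (ψ := fun θ => Real.sin (2 * θ)) (by fun_prop) (by fun_prop) 1 0 1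
  rw [pd_sphCoeff]
  refine (congrFun hprod x).trans ?_
  simp only [hsin, one_ne_zero, if_true, if_false]
  ring

theorem pd_zero_pd_zero_sphCoeff_three (μ : ℝ → ℝ) (hν : ContDiffAt ℝ 2 ν (x 0)) :
    pd (pd (fun y => sphCoeff μ ν y 3) 0) 0 x =
      Real.exp (ν (x 0)) * (deriv ν (x 0) ^ 2 + deriv (deriv ν) (x 0)) := by
  have hpd : pd (fun y => sphCoeff μ ν y 3) 0 =
      fun y => deriv (fun ρ => Real.exp (ν ρ)) (y 0) := pd_sphCoeff μ ν 0 3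
  rw [hpd, ← deriv_deriv_exp_comp hν]
  exact congrFun (pd_comp_apply _ 0 0) x

theorem Rcov_gSph_zero_two (hρ : x 0 ≠ 0) (hθ : Real.sin (x 1) ≠ 0)
    (hμ : DifferentiableAt ℝ μ (x 0)) :
    Rcov (gSph μ ν) 0 2 0 2 x = x 0 * deriv μ (x 0) * Real.sin (x 1) ^ 2 / 2 := by
  rw [gSph_eq_diagonal, Rcov_diagonal (by decide) (sphCoeff_ne_zero hρ hθ),
    pd_zero_pd_zero_sphCoeff_two,
    show ({0, 2} : Finset (Fin 4))ᶜ = {1, 3} by decide, Finset.sum_pair (by decide)]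
  simp only [pd_sphCoeff, Matrix.of_apply, Matrix.cons_val, pd_const, Pi.zero_apply]
  simp only [sphCoeff, Matrix.cons_val, deriv_exp hμ]
  field_simp
  ring

theorem Rcov_gSph_zero_three (hρ : x 0 ≠ 0) (hθ : Real.sin (x 1) ≠ 0)
    (hμ : DifferentiableAt ℝ μ (x 0)) (hν : ContDiffAt ℝ 2 ν (x 0)) :
    Rcov (gSph μ ν) 0 3 0 3 x = Real.exp (ν (x 0)) *
      (deriv μ (x 0) * deriv ν (x 0) - deriv ν (x 0) ^ 2 - 2 * deriv (deriv ν) (x 0)) / 4 := by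
  have hν' : DifferentiableAt ℝ ν (x 0) := hν.differentiableAt two_ne_zero
  rw [gSph_eq_diagonal, Rcov_diagonal (by decide) (sphCoeff_ne_zero hρ hθ),
    pd_zero_pd_zero_sphCoeff_three μ hν,
    show ({0, 3} : Finset (Fin 4))ᶜ = {1, 2} by decide, Finset.sum_pair (by decide)]
  simp only [pd_sphCoeff, Matrix.of_apply, Matrix.cons_val, pd_const, Pi.zero_apply]
  simp only [sphCoeff, Matrix.cons_val, deriv_exp hμ, deriv_exp hν']
  field_simp
  ring

theorem Rcov_gSph_one_two (hρ : x 0 ≠ 0) (hθ : Real.sin (x 1) ≠ 0) :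
    Rcov (gSph μ ν) 1 2 1 2 x = x 0 ^ 2 * Real.sin (x 1) ^ 2 * (1 - Real.exp (-μ (x 0))) := by
  rw [gSph_eq_diagonal, Rcov_diagonal (by decide) (sphCoeff_ne_zero hρ hθ),
    pd_one_pd_one_sphCoeff_two,
    show ({1, 2} : Finset (Fin 4))ᶜ = {0, 3} by decide, Finset.sum_pair (by decide)]
  simp only [pd_sphCoeff, Matrix.of_apply, Matrix.cons_val, pd_const, Pi.zero_apply]
  simp only [sphCoeff, Matrix.cons_val, Real.exp_neg, Real.cos_two_mul', Real.sin_two_mul]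
  field_simp
  ring

theorem Rcov_gSph_one_three (hρ : x 0 ≠ 0) (hθ : Real.sin (x 1) ≠ 0)
    (hν : DifferentiableAt ℝ ν (x 0)) :
    Rcov (gSph μ ν) 1 3 1 3 x = -x 0 * deriv ν (x 0) * Real.exp (ν (x 0) - μ (x 0)) / 2 := by
  rw [gSph_eq_diagonal, Rcov_diagonal (by decide) (sphCoeff_ne_zero hρ hθ),
    show ({1, 3} : Finset (Fin 4))ᶜ = {0, 2} by decide, Finset.sum_pair (by decide)]
  simp only [pd_sphCoeff, Matrix.of_apply, Matrix.cons_val, pd_const, Pi.zero_apply]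
  simp only [sphCoeff, Matrix.cons_val, deriv_exp hν, Real.exp_sub]
  field_simp
  ring

end SphericallySymmetricMetric

section SchwarzschildMetric

variable {m ρ : ℝ} {x : Fin 4 → ℝ}

/-- The exponent `ν` of the Schwarzschild metric of mass `m`. As `Real.log` is even, it
satisfies `e^ν = 1 - 2m/ρ` only where `2m/ρ < 1`. -/
def schwarzschildExponent (m ρ : ℝ) : ℝ :=
  Real.log (1 - 2 * m / ρ)

/-- The Schwarzschild metric of mass `m`, as the spherically symmetric metric with `μ = -ν`. Here
`m` is any real number, and the metric has its usual meaning where `ρ ≠ 0` and `2m/ρ < 1`. -/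
def schwarzschildMetric (m : ℝ) : (Fin 4 → ℝ) → Matrix (Fin 4) (Fin 4) ℝ :=
  gSph (-schwarzschildExponent m) (schwarzschildExponent m)

theorem gSph_eq_schwarzschildMetric {μ ν : ℝ → ℝ} (hμ : ∀ ρ, μ ρ = -Real.log (1 - 2 * m / ρ))
    (hν : ∀ ρ, ν ρ = -μ ρ) : gSph μ ν = schwarzschildMetric m := by
  obtain rfl : μ = -schwarzschildExponent m := funext hμ
  obtain rfl : ν = schwarzschildExponent m := funext fun ρ => by simp [hν]
  rfl

theorem det_schwarzschildMetric (m : ℝ) (x : Fin 4 → ℝ) :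
    (schwarzschildMetric m x).det = x 0 ^ 4 * Real.sin (x 1) ^ 2 := by
  simp [schwarzschildMetric, det_gSph]

theorem exp_schwarzschildExponent (hm : 2 * m / ρ < 1) :
    Real.exp (schwarzschildExponent m ρ) = 1 - 2 * m / ρ :=
  Real.exp_log (sub_pos.2 hm)

theorem contDiffAt_schwarzschildExponent (hρ : ρ ≠ 0) (hm : 2 * m / ρ < 1) {n : WithTop ℕ∞} :
    ContDiffAt ℝ n (schwarzschildExponent m) ρ :=
  (contDiffAt_const.sub (contDiffAt_const.div contDiffAt_id hρ)).log (sub_pos.2 hm).ne'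

theorem hasDerivAt_one_sub_two_mul_div (m : ℝ) (hρ : ρ ≠ 0) :
    HasDerivAt (fun r => 1 - 2 * m / r) (2 * m / ρ ^ 2) ρ := by
  simpa [div_eq_mul_inv] using ((hasDerivAt_inv hρ).const_mul (2 * m)).const_sub 1

theorem deriv_schwarzschildExponent (hρ : ρ ≠ 0) (hm : 2 * m / ρ < 1) :
    deriv (schwarzschildExponent m) ρ = 2 * m / (ρ ^ 2 * (1 - 2 * m / ρ)) := by
  have hlog := (hasDerivAt_one_sub_two_mul_div m hρ).log (sub_pos.2 hm).ne'
  exact hlog.deriv.trans (div_div _ _ _)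

theorem deriv_deriv_exp_schwarzschildExponent (hρ : ρ ≠ 0) (hm : 2 * m / ρ < 1) :
    deriv (deriv fun r => Real.exp (schwarzschildExponent m r)) ρ = -4 * m / ρ ^ 3 := by
  have hcont : ContinuousAt (fun r => 2 * m / r) ρ := by fun_prop (disch := exact hρ)
  have hexp : (fun r => Real.exp (schwarzschildExponent m r)) =ᶠ[nhds ρ] fun r => 1 - 2 * m / r :=
    (hcont.eventually_lt_const hm).mono fun _ => exp_schwarzschildExponent
  have hderiv : deriv (fun r => 1 - 2 * m / r) =ᶠ[nhds ρ] fun r => 2 * m / r ^ 2 :=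
    (eventually_ne_nhds hρ).mono fun _ hr => (hasDerivAt_one_sub_two_mul_div m hr).deriv
  have hdiv := (hasDerivAt_const ρ (2 * m)).div (hasDerivAt_pow 2 ρ) (pow_ne_zero 2 hρ)
  rw [(hexp.deriv.trans hderiv).deriv_eq]
  refine hdiv.deriv.trans ?_
  field_simp
  norm_num
  ring

theorem Rcov_schwarzschildMetric_zero_two (hρ : x 0 ≠ 0) (hm : 2 * m / x 0 < 1)
    (hθ : Real.sin (x 1) ≠ 0) :
    Rcov (schwarzschildMetric m) 0 2 0 2 x =
      -(m * Real.sin (x 1) ^ 2) / (x 0 * (1 - 2 * m / x 0)) := by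
  have hν := (contDiffAt_schwarzschildExponent hρ hm).differentiableAt one_ne_zero
  rw [schwarzschildMetric, Rcov_gSph_zero_two hρ hθ hν.neg, deriv.neg,
    deriv_schwarzschildExponent hρ hm]
  field_simp

theorem Rcov_schwarzschildMetric_zero_three (hρ : x 0 ≠ 0) (hm : 2 * m / x 0 < 1)
    (hθ : Real.sin (x 1) ≠ 0) :
    Rcov (schwarzschildMetric m) 0 3 0 3 x = 2 * m / x 0 ^ 3 := by
  have hν := contDiffAt_schwarzschildExponent hρ hm (n := 2)
  rw [schwarzschildMetric, Rcov_gSph_zero_three hρ hθ (hν.differentiableAt two_ne_zero).neg hν,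
    deriv.neg]
  calc
    _ = -(Real.exp (schwarzschildExponent m (x 0)) * (deriv (schwarzschildExponent m) (x 0) ^ 2 +
          deriv (deriv (schwarzschildExponent m)) (x 0))) / 2 := by ring
    _ = 2 * m / x 0 ^ 3 := by
      rw [← deriv_deriv_exp_comp hν, deriv_deriv_exp_schwarzschildExponent hρ hm]
      ring

theorem Rcov_schwarzschildMetric_one_two (hρ : x 0 ≠ 0) (hm : 2 * m / x 0 < 1)
    (hθ : Real.sin (x 1) ≠ 0) :
    Rcov (schwarzschildMetric m) 1 2 1 2 x = 2 * m * x 0 * Real.sin (x 1) ^ 2 := by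
  rw [schwarzschildMetric, Rcov_gSph_one_two hρ hθ, Pi.neg_apply, neg_neg,
    exp_schwarzschildExponent hm]
  field_simp
  ring

theorem Rcov_schwarzschildMetric_one_three (hρ : x 0 ≠ 0) (hm : 2 * m / x 0 < 1)
    (hθ : Real.sin (x 1) ≠ 0) :
    Rcov (schwarzschildMetric m) 1 3 1 3 x = -m * (1 - 2 * m / x 0) / x 0 := by
  have hν := (contDiffAt_schwarzschildExponent hρ hm).differentiableAt one_ne_zero
  rw [schwarzschildMetric, Rcov_gSph_one_three hρ hθ hν, Pi.neg_apply, sub_neg_eq_add,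
    Real.exp_add, exp_schwarzschildExponent hm, deriv_schwarzschildExponent hρ hm]
  field_simp

theorem Rcov_schwarzschildMetric_prod (hρ : x 0 ≠ 0) (hm : 2 * m / x 0 < 1)
    (hθ : Real.sin (x 1) ≠ 0) :
    Rcov (schwarzschildMetric m) 0 2 0 2 x * Rcov (schwarzschildMetric m) 0 3 0 3 x *
        Rcov (schwarzschildMetric m) 1 2 1 2 x * Rcov (schwarzschildMetric m) 1 3 1 3 x =
      (schwarzschildMetric m x).det ^ 2 * (2 * m ^ 2 / x 0 ^ 6) ^ 2 := by
  have hf : 1 - 2 * m / x 0 ≠ 0 := (sub_pos.2 hm).ne'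
  rw [Rcov_schwarzschildMetric_zero_two hρ hm hθ, Rcov_schwarzschildMetric_zero_three hρ hm hθ,
    Rcov_schwarzschildMetric_one_two hρ hm hθ, Rcov_schwarzschildMetric_one_three hρ hm hθ,
    det_schwarzschildMetric]
  generalize 1 - 2 * m / x 0 = f at hf
  field_simp [hf]

theorem schwarzschild_curvature_general (hρ : x 0 ≠ 0) (hm : 2 * m / x 0 < 1)
    (hθ : Real.sin (x 1) ≠ 0) :
    Rcov (schwarzschildMetric m) 0 2 0 2 x * Rcov (schwarzschildMetric m) 0 3 0 3 x *
          Rcov (schwarzschildMetric m) 1 2 1 2 x * Rcov (schwarzschildMetric m) 1 3 1 3 x =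
        (schwarzschildMetric m x).det ^ 2 * (2 * m ^ 2 / x 0 ^ 6) ^ 2 ∧
      (schwarzschildMetric m x).det = x 0 ^ 4 * Real.sin (x 1) ^ 2 ∧
      Real.sqrt (Rcov (schwarzschildMetric m) 0 2 0 2 x * Rcov (schwarzschildMetric m) 0 3 0 3 x *
            Rcov (schwarzschildMetric m) 1 2 1 2 x * Rcov (schwarzschildMetric m) 1 3 1 3 x) /
          (schwarzschildMetric m x).det =
        2 * m ^ 2 / x 0 ^ 6 := by
  refine ⟨Rcov_schwarzschildMetric_prod hρ hm hθ, det_schwarzschildMetric m x, ?_⟩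
  rw [Rcov_schwarzschildMetric_prod hρ hm hθ, ← mul_pow, det_schwarzschildMetric,
    Real.sqrt_sq (by positivity), mul_div_cancel_left₀ _ (by positivity)]

end SchwarzschildMetric

/-- for the Schwarzschild metric, i.e. the spherically symmetric metric with
`μ(ρ) = -ln (1 - 2m/ρ)` and `ν = -μ` (so `g = diag ((1 - 2m/ρ)⁻¹, ρ², ρ² sin² θ, 1 - 2m/ρ)`),
on `ρ > 2m`, `0 < θ < π` one has `R₁₃₁₃ R₁₄₁₄ R₂₃₂₃ R₂₄₂₄ = (det g)² (2m²/ρ⁶)²` with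
`det g = ρ⁴ sin² θ`; hence the curvature
`κ = √(R₁₃₁₃ R₁₄₁₄ R₂₃₂₃ R₂₄₂₄) / det g` equals `2m²/ρ⁶`.  (Indices here are 0-based.) -/
theorem schwarzschild_curvature (m : ℝ) (hm : 0 < m) (μ ν : ℝ → ℝ)
    (hμdef : ∀ ρ : ℝ, μ ρ = -Real.log (1 - 2 * m / ρ))
    (hνdef : ∀ ρ : ℝ, ν ρ = -μ ρ) :
    ∀ x : Fin 4 → ℝ, 2 * m < x 0 → 0 < x 1 → x 1 < Real.pi →
      Rcov (gSph μ ν) 0 2 0 2 x * Rcov (gSph μ ν) 0 3 0 3 x *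
          Rcov (gSph μ ν) 1 2 1 2 x * Rcov (gSph μ ν) 1 3 1 3 x =
        ((gSph μ ν x).det) ^ 2 * (2 * m ^ 2 / (x 0) ^ 6) ^ 2 ∧
      (gSph μ ν x).det = (x 0) ^ 4 * Real.sin (x 1) ^ 2 ∧
      Real.sqrt (Rcov (gSph μ ν) 0 2 0 2 x * Rcov (gSph μ ν) 0 3 0 3 x *
            Rcov (gSph μ ν) 1 2 1 2 x * Rcov (gSph μ ν) 1 3 1 3 x) /
          (gSph μ ν x).det =
        2 * m ^ 2 / (x 0) ^ 6 := by
  intro x hx hx₀ hxπ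
  have hρ : 0 < x 0 := by linarith
  rw [gSph_eq_schwarzschildMetric hμdef hνdef]
  exact schwarzschild_curvature_general hρ.ne' ((div_lt_one hρ).2 hx)
    (Real.sin_pos_of_pos_of_lt_pi hx₀ hxπ).ne'

end
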